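/- If 1 − (d−1)ν − (K−1)dμ_B > 0, then A_nz has linearly independent columns and the induced mixed norm satisfies ‖A_z^T (A_nz^†)^T‖_{2,∞} ≤ Kdμ_B / (1 − (d−1)ν − (K−1)dμ_B). -/

import Mathlib

/- Setting: a measurement matrix `A ∈ ℝ^{m×n}` with `n = L·d`, partitioned into `L` column
blocks of size `m×d`; columns are indexed by pairs `(l, j)` (block `l`, position `j`). -/

noncomputable section

open Finset Matrix

/-- Euclidean (ℓ₂) norm of a finitely indexed real vector. -/
def e2norm {ι : Type*} [Fintype ι] (v : ι → ℝ) : ℝ := Real.sqrt (∑ i, v i ^ 2)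

/-- Euclidean inner (dot) product of two real vectors. -/
def dotp {ι : Type*} [Fintype ι] (u v : ι → ℝ) : ℝ := ∑ i, u i * v i

/-- The `(l, j)` column of the block matrix `A` (block `l`, position `j` inside the block). -/
def acol {m L d : ℕ} (A : Matrix (Fin m) (Fin L × Fin d) ℝ) (l : Fin L) (j : Fin d) :
    Fin m → ℝ :=
  fun i => A i (l, j)

/-- `A_lᵀ v` : correlation of the `l`-th block of `A` with a vector `v ∈ ℝ^m`. -/
def blkT {m L d : ℕ} (A : Matrix (Fin m) (Fin L × Fin d) ℝ) (l : Fin L) (v : Fin m → ℝ) :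
    Fin d → ℝ :=
  fun j => dotp (acol A l j) v

/-- Spectral norm (largest singular value) `ρ(X)` of a real matrix, as the supremum of
`‖Xu‖₂ / ‖u‖₂` over nonzero `u`. -/
def specNorm {p q : ℕ} (X : Matrix (Fin p) (Fin q) ℝ) : ℝ :=
  ⨆ u : {u : Fin q → ℝ // u ≠ 0}, e2norm (X *ᵥ u.1) / e2norm u.1

/-- The `d × d` cross-Gram matrix `A_iᵀ A_j` of two blocks of `A`. -/
def bgram {m L d : ℕ} (A : Matrix (Fin m) (Fin L × Fin d) ℝ) (i j : Fin L) :
    Matrix (Fin d) (Fin d) ℝ :=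
  fun a b => dotp (acol A i a) (acol A j b)

/-- Block-coherence `μ_B = max_{i ≠ j} (1/d) ρ(A_iᵀ A_j)`. -/
def blockCoh {m L d : ℕ} (A : Matrix (Fin m) (Fin L × Fin d) ℝ) : ℝ :=
  ⨆ p : {p : Fin L × Fin L // p.1 ≠ p.2},
    (1 / (d : ℝ)) * specNorm (bgram A p.1.1 p.1.2)

/-- Sub-coherence `ν`: the maximum of `|a_iᵀ a_j|` over pairs of distinct columns lying in the
same block of `A`. -/
def subCoh {m L d : ℕ} (A : Matrix (Fin m) (Fin L × Fin d) ℝ) : ℝ :=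
  ⨆ t : {t : Fin L × Fin d × Fin d // t.2.1 ≠ t.2.2},
    |dotp (acol A t.1.1 t.1.2.1) (acol A t.1.1 t.1.2.2)|

/-- Mixed `ℓ₂/ℓ∞` norm (block size `d`) of a block-partitioned vector. -/
def bnorm2inf {σ : Type*} [Fintype σ] {d : ℕ} (z : σ × Fin d → ℝ) : ℝ :=
  ⨆ q : σ, e2norm (fun j => z (q, j))

/-- Induced mixed `ℓ₂/ℓ∞` matrix norm (block size `d`). -/
def bOpNorm {σ τ : Type*} [Fintype σ] [Fintype τ] {d : ℕ}
    (X : Matrix (σ × Fin d) (τ × Fin d) ℝ) : ℝ :=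
  ⨆ z : {z : τ × Fin d → ℝ // z ≠ 0}, bnorm2inf (X *ᵥ z.1) / bnorm2inf z.1

/-- `A_nz`: the concatenation of the blocks of `A` indexed by `I1`. -/
def Anz {m L d : ℕ} (A : Matrix (Fin m) (Fin L × Fin d) ℝ) (I1 : Finset (Fin L)) :
    Matrix (Fin m) ({l : Fin L // l ∈ I1} × Fin d) ℝ :=
  fun i c => A i (c.1.1, c.2)

/-- `A_z`: the concatenation of the blocks of `A` not indexed by `I1`. -/
def Az {m L d : ℕ} (A : Matrix (Fin m) (Fin L × Fin d) ℝ) (I1 : Finset (Fin L)) :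
    Matrix (Fin m) ({l : Fin L // l ∉ I1} × Fin d) ℝ :=
  fun i c => A i (c.1.1, c.2)

/-- Moore–Penrose pseudoinverse `X† = (XᵀX)⁻¹ Xᵀ` of a matrix with linearly independent
columns (for such matrices this closed form is the Moore–Penrose pseudoinverse). -/
def pinvc {m : ℕ} {ι : Type*} [Fintype ι] [DecidableEq ι]
    (X : Matrix (Fin m) ι ℝ) : Matrix ι (Fin m) ℝ :=
  (Xᵀ * X)⁻¹ * Xᵀ

/-! In the mixed norm, the Gram matrix `A_nzᵀ A_nz` is block diagonally dominant: by Cauchy–Schwarz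
its diagonal blocks `A_lᵀ A_l` shrink the Euclidean norm by at most the factor `1 - (d-1)ν`, while
each of the other `K - 1` blocks in a block row has spectral norm at most `dμ_B`. As in Gershgorin's
theorem, reading `A_nzᵀ A_nz z` at the largest block of `z` gives
`‖A_nzᵀ A_nz z‖ ≥ (1 - (d-1)ν - (K-1)dμ_B) ‖z‖`, so the Gram matrix is invertible. A block row of
`A_zᵀ A_nz` consists of `K` blocks of spectral norm at most `dμ_B`, and
`A_zᵀ (A_nz†)ᵀ = (A_zᵀ A_nz) (A_nzᵀ A_nz)⁻¹`. -/

section EuclideanNorm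

variable {ι : Type*} [Fintype ι]

lemma e2norm_eq_norm_toLp (v : ι → ℝ) : e2norm v = ‖WithLp.toLp 2 v‖ := by
  simp [e2norm, EuclideanSpace.norm_eq]

lemma e2norm_nonneg (v : ι → ℝ) : 0 ≤ e2norm v := Real.sqrt_nonneg _

lemma e2norm_sq (v : ι → ℝ) : e2norm v ^ 2 = ∑ i, v i ^ 2 :=
  Real.sq_sqrt (Finset.sum_nonneg fun _ _ => sq_nonneg _)

lemma e2norm_zero : e2norm (0 : ι → ℝ) = 0 := by
  simp [e2norm]

lemma e2norm_pos {v : ι → ℝ} (hv : v ≠ 0) : 0 < e2norm v := by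
  simpa [e2norm_eq_norm_toLp] using hv

lemma e2norm_le_e2norm_add_add_e2norm (u v : ι → ℝ) : e2norm u ≤ e2norm (u + v) + e2norm v := by
  simpa only [e2norm_eq_norm_toLp, WithLp.toLp_add] using norm_le_add_norm_add _ _

lemma e2norm_sum_le {κ : Type*} (s : Finset κ) (f : κ → ι → ℝ) :
    e2norm (∑ r ∈ s, f r) ≤ ∑ r ∈ s, e2norm (f r) := by
  simpa only [e2norm_eq_norm_toLp, WithLp.toLp_sum] using norm_sum_le _ _

end EuclideanNorm

section SpectralNorm

variable {p q : ℕ} (X : Matrix (Fin p) (Fin q) ℝ)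

lemma specNorm_nonneg : 0 ≤ specNorm X :=
  Real.iSup_nonneg fun _ => div_nonneg (e2norm_nonneg _) (e2norm_nonneg _)

open scoped Matrix.Norms.L2Operator in
lemma bddAbove_range_e2norm_mulVec_div :
    BddAbove (Set.range fun u : {u : Fin q → ℝ // u ≠ 0} => e2norm (X *ᵥ u.1) / e2norm u.1) := by
  refine ⟨‖X‖, ?_⟩
  rintro _ ⟨u, rfl⟩
  rw [div_le_iff₀ (e2norm_pos u.2), e2norm_eq_norm_toLp, e2norm_eq_norm_toLp]
  exact Matrix.l2_opNorm_mulVec X (WithLp.toLp 2 u.1)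

lemma e2norm_mulVec_le_specNorm_mul (u : Fin q → ℝ) :
    e2norm (X *ᵥ u) ≤ specNorm X * e2norm u := by
  rcases eq_or_ne u 0 with rfl | hu
  · simp [e2norm_zero]
  · rw [← div_le_iff₀ (e2norm_pos hu)]
    exact le_ciSup (bddAbove_range_e2norm_mulVec_div X) ⟨u, hu⟩

end SpectralNorm

section UnitDiagonal

variable {ι : Type*} [Fintype ι]

lemma sum_sum_erase [DecidableEq ι] {R : Type*} [Ring R] (f : ι → R) :
    ∑ a, ∑ b ∈ univ.erase a, f b = ((Fintype.card ι : R) - 1) * ∑ b, f b := by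
  simp only [Finset.sum_erase_eq_sub (mem_univ _), sum_sub_distrib, sum_const, card_univ,
    nsmul_eq_mul, sub_one_mul]

lemma cast_card_univ_erase [DecidableEq ι] (a : ι) :
    ((univ.erase a).card : ℝ) = (Fintype.card ι : ℝ) - 1 := by
  rw [Finset.cast_card_erase_of_mem (mem_univ a), card_univ]

lemma sq_mulVec_apply_le_of_diag_eq_zero [DecidableEq ι] {E : Matrix ι ι ℝ} {ν : ℝ} {a : ι}
    (hdiag : E a a = 0) (hoff : ∀ b, a ≠ b → |E a b| ≤ ν) (u : ι → ℝ) :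
    (E *ᵥ u) a ^ 2 ≤ ((Fintype.card ι : ℝ) - 1) * ν ^ 2 * ∑ b ∈ univ.erase a, u b ^ 2 := by
  have hsq : ∀ b ∈ univ.erase a, (E a b * u b) ^ 2 ≤ ν ^ 2 * u b ^ 2 := fun b hb => by
    rw [mul_pow]
    exact mul_le_mul_of_nonneg_right
      (sq_le_sq.2 ((hoff b (ne_of_mem_erase hb).symm).trans (le_abs_self ν))) (sq_nonneg _)
  calc (E *ᵥ u) a ^ 2
      = (∑ b ∈ univ.erase a, E a b * u b) ^ 2 := by
        rw [Matrix.mulVec, dotProduct, Finset.sum_erase _ (by rw [hdiag, zero_mul])]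
    _ ≤ ((univ.erase a).card : ℝ) * ∑ b ∈ univ.erase a, (E a b * u b) ^ 2 :=
        sq_sum_le_card_mul_sum_sq
    _ ≤ ((univ.erase a).card : ℝ) * ∑ b ∈ univ.erase a, ν ^ 2 * u b ^ 2 :=
        mul_le_mul_of_nonneg_left (sum_le_sum hsq) (Nat.cast_nonneg _)
    _ = ((Fintype.card ι : ℝ) - 1) * ν ^ 2 * ∑ b ∈ univ.erase a, u b ^ 2 := by
        rw [cast_card_univ_erase, ← mul_sum, mul_assoc]

variable [Nonempty ι] {ν : ℝ} (hν : 0 ≤ ν)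
include hν

lemma e2norm_mulVec_le_of_diag_eq_zero {E : Matrix ι ι ℝ} (hdiag : ∀ a, E a a = 0)
    (hoff : ∀ a b, a ≠ b → |E a b| ≤ ν) (u : ι → ℝ) :
    e2norm (E *ᵥ u) ≤ ((Fintype.card ι : ℝ) - 1) * ν * e2norm u := by
  classical
  have hcard : (0 : ℝ) ≤ (Fintype.card ι : ℝ) - 1 :=
    sub_nonneg.2 (Nat.one_le_cast.2 Fintype.card_pos)
  refine le_of_sq_le_sq ?_ (mul_nonneg (mul_nonneg hcard hν) (e2norm_nonneg u))
  calc e2norm (E *ᵥ u) ^ 2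
      = ∑ a, (E *ᵥ u) a ^ 2 := e2norm_sq _
    _ ≤ ∑ a, ((Fintype.card ι : ℝ) - 1) * ν ^ 2 * ∑ b ∈ univ.erase a, u b ^ 2 :=
        sum_le_sum fun a _ => sq_mulVec_apply_le_of_diag_eq_zero (hdiag a) (hoff a) u
    _ = (((Fintype.card ι : ℝ) - 1) * ν * e2norm u) ^ 2 := by
        rw [← mul_sum, sum_sum_erase, mul_pow, e2norm_sq]
        ring

lemma le_e2norm_mulVec_of_diag_eq_one {G : Matrix ι ι ℝ} (hdiag : ∀ a, G a a = 1)
    (hoff : ∀ a b, a ≠ b → |G a b| ≤ ν) (u : ι → ℝ) :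
    (1 - ((Fintype.card ι : ℝ) - 1) * ν) * e2norm u ≤ e2norm (G *ᵥ u) := by
  classical
  have hE : e2norm ((G - 1) *ᵥ u) ≤ ((Fintype.card ι : ℝ) - 1) * ν * e2norm u :=
    e2norm_mulVec_le_of_diag_eq_zero hν (fun a => by simp [hdiag])
      (fun a b hab => by simpa [hab] using hoff a b hab) u
  have htri := e2norm_le_e2norm_add_add_e2norm u ((G - 1) *ᵥ u)
  rw [Matrix.sub_mulVec, Matrix.one_mulVec] at hE htri
  rw [add_sub_cancel] at htri
  linarith

end UnitDiagonal

section MixedNorm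

variable {σ : Type*} [Fintype σ] {d : ℕ}

lemma e2norm_le_bnorm2inf (z : σ × Fin d → ℝ) (q : σ) :
    e2norm (fun j => z (q, j)) ≤ bnorm2inf z :=
  le_ciSup (f := fun q => e2norm fun j => z (q, j)) (Set.finite_range _).bddAbove q

lemma bnorm2inf_nonneg (z : σ × Fin d → ℝ) : 0 ≤ bnorm2inf z :=
  Real.iSup_nonneg fun _ => e2norm_nonneg _

lemma bnorm2inf_zero : bnorm2inf (0 : σ × Fin d → ℝ) = 0 := by
  simp [bnorm2inf, e2norm]

lemma bnorm2inf_pos {z : σ × Fin d → ℝ} (hz : z ≠ 0) : 0 < bnorm2inf z := by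
  obtain ⟨⟨q, j⟩, hqj⟩ := Function.ne_iff.1 hz
  exact (e2norm_pos fun h => hqj (congrFun h j)).trans_le (e2norm_le_bnorm2inf z q)

end MixedNorm

section BlockMatrix

variable {σ τ : Type*} [Fintype τ] {d : ℕ}

/-- The `(s, t)` block of a block-partitioned matrix with `d × d` blocks; the first component of an
index selects the block, as in `Anz` and `Az`. -/
def matBlock (M : Matrix (σ × Fin d) (τ × Fin d) ℝ) (s : σ) (t : τ) : Matrix (Fin d) (Fin d) ℝ :=
  M.submatrix (Prod.mk s) (Prod.mk t)

lemma mulVec_block_eq_sum (M : Matrix (σ × Fin d) (τ × Fin d) ℝ) (z : τ × Fin d → ℝ) (s : σ) :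
    (fun j => (M *ᵥ z) (s, j)) = ∑ t, matBlock M s t *ᵥ fun k => z (t, k) := by
  funext j
  simp only [Finset.sum_apply, Matrix.mulVec, dotProduct, Fintype.sum_prod_type, matBlock,
    Matrix.submatrix_apply]

lemma e2norm_sum_matBlock_mulVec_le {M : Matrix (σ × Fin d) (τ × Fin d) ℝ} {β : ℝ} {s : σ}
    {T : Finset τ} (hM : ∀ t ∈ T, specNorm (matBlock M s t) ≤ β) (z : τ × Fin d → ℝ) :
    e2norm (∑ t ∈ T, matBlock M s t *ᵥ fun k => z (t, k)) ≤ T.card * β * bnorm2inf z := by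
  have hterm : ∀ t ∈ T, e2norm (matBlock M s t *ᵥ fun k => z (t, k)) ≤ β * bnorm2inf z :=
    fun t ht => (e2norm_mulVec_le_specNorm_mul _ _).trans <|
      mul_le_mul (hM t ht) (e2norm_le_bnorm2inf z t) (e2norm_nonneg _)
        ((specNorm_nonneg _).trans (hM t ht))
  calc e2norm (∑ t ∈ T, matBlock M s t *ᵥ fun k => z (t, k))
      ≤ ∑ t ∈ T, e2norm (matBlock M s t *ᵥ fun k => z (t, k)) := e2norm_sum_le _ _
    _ ≤ T.card • (β * bnorm2inf z) := sum_le_card_nsmul _ _ _ hterm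
    _ = T.card * β * bnorm2inf z := by rw [nsmul_eq_mul, mul_assoc]

variable [Fintype σ]

lemma bnorm2inf_mulVec_le {M : Matrix (σ × Fin d) (τ × Fin d) ℝ} {β : ℝ} (hβ : 0 ≤ β)
    (hM : ∀ s t, specNorm (matBlock M s t) ≤ β) (z : τ × Fin d → ℝ) :
    bnorm2inf (M *ᵥ z) ≤ Fintype.card τ * β * bnorm2inf z := by
  refine Real.iSup_le (fun s => ?_)
    (mul_nonneg (mul_nonneg (Nat.cast_nonneg _) hβ) (bnorm2inf_nonneg z))
  rw [mulVec_block_eq_sum]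
  exact e2norm_sum_matBlock_mulVec_le (fun t _ => hM s t) z

lemma le_bnorm2inf_mulVec_of_block_dominant
    {M : Matrix (σ × Fin d) (σ × Fin d) ℝ} {α β : ℝ}
    (hdiag : ∀ s u, α * e2norm u ≤ e2norm (matBlock M s s *ᵥ u))
    (hoff : ∀ s t, s ≠ t → specNorm (matBlock M s t) ≤ β) (z : σ × Fin d → ℝ) :
    (α - ((Fintype.card σ : ℝ) - 1) * β) * bnorm2inf z ≤ bnorm2inf (M *ᵥ z) := by
  rcases isEmpty_or_nonempty σ with hσ | hσ
  · simp [bnorm2inf]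
  classical
  obtain ⟨s, hs⟩ : ∃ s, e2norm (fun j => z (s, j)) = bnorm2inf z := exists_eq_ciSup_of_finite
  have hdiag_s := hdiag s fun j => z (s, j)
  have hoff_s := e2norm_sum_matBlock_mulVec_le (T := univ.erase s)
    (fun t ht => hoff s t (ne_of_mem_erase ht).symm) z
  have htri := e2norm_le_e2norm_add_add_e2norm (matBlock M s s *ᵥ fun j => z (s, j))
    (∑ t ∈ univ.erase s, matBlock M s t *ᵥ fun k => z (t, k))
  rw [Finset.add_sum_erase _ (fun t => matBlock M s t *ᵥ fun k => z (t, k)) (mem_univ s),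
    ← mulVec_block_eq_sum] at htri
  rw [hs] at hdiag_s
  rw [cast_card_univ_erase] at hoff_s
  linarith [e2norm_le_bnorm2inf (M *ᵥ z) s]

variable [DecidableEq τ] {M : Matrix (τ × Fin d) (τ × Fin d) ℝ} {c : ℝ} (hc : 0 < c)
  (hM : ∀ w, c * bnorm2inf w ≤ bnorm2inf (M *ᵥ w))
include hc hM

lemma isUnit_of_le_bnorm2inf_mulVec : IsUnit M := by
  refine Matrix.mulVec_injective_iff_isUnit.1 fun u v huv => sub_eq_zero.1 ?_
  by_contra hne
  have hle := hM (u - v)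
  rw [Matrix.mulVec_sub, sub_eq_zero.2 huv, bnorm2inf_zero] at hle
  exact hle.not_gt (mul_pos hc (bnorm2inf_pos hne))

lemma bOpNorm_mul_inv_le {B : Matrix (σ × Fin d) (τ × Fin d) ℝ} {C : ℝ} (hC : 0 ≤ C)
    (hB : ∀ w, bnorm2inf (B *ᵥ w) ≤ C * bnorm2inf w) : bOpNorm (B * M⁻¹) ≤ C / c := by
  have hdet : IsUnit M.det := M.isUnit_iff_isUnit_det.1 (isUnit_of_le_bnorm2inf_mulVec hc hM)
  refine Real.iSup_le ?_ (div_nonneg hC hc.le)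
  rintro ⟨z, hz⟩
  rw [div_le_iff₀ (bnorm2inf_pos hz)]
  have hinv : c * bnorm2inf (M⁻¹ *ᵥ z) ≤ bnorm2inf z := by
    simpa [Matrix.mulVec_mulVec, Matrix.mul_nonsing_inv _ hdet] using hM (M⁻¹ *ᵥ z)
  calc bnorm2inf ((B * M⁻¹) *ᵥ z)
      = bnorm2inf (B *ᵥ (M⁻¹ *ᵥ z)) := by rw [Matrix.mulVec_mulVec]
    _ ≤ C * bnorm2inf (M⁻¹ *ᵥ z) := hB _
    _ ≤ C * (bnorm2inf z / c) :=
        mul_le_mul_of_nonneg_left ((le_div_iff₀' hc).2 hinv) hC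
    _ = C / c * bnorm2inf z := by ring

end BlockMatrix

section Pseudoinverse

variable {ι : Type*} [Fintype ι] [DecidableEq ι]

lemma linearIndependent_col_of_isUnit_gram {μ R : Type*} [Fintype μ] [CommRing R]
    {X : Matrix μ ι R} (hX : IsUnit (Xᵀ * X)) : LinearIndependent R X.col := by
  refine Matrix.mulVec_injective_iff.1 fun u v huv => Matrix.mulVec_injective_of_isUnit hX ?_
  simp only [← Matrix.mulVec_mulVec, huv]

lemma transpose_mul_transpose_pinvc {m : ℕ} {κ : Type*} (X : Matrix (Fin m) ι ℝ)
    (Y : Matrix (Fin m) κ ℝ) :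
    Yᵀ * (pinvc X)ᵀ = Yᵀ * X * (Xᵀ * X)⁻¹ := by
  rw [pinvc, Matrix.transpose_mul, Matrix.transpose_transpose, Matrix.transpose_nonsing_inv,
    Matrix.transpose_mul, Matrix.transpose_transpose, Matrix.mul_assoc]

end Pseudoinverse

section Coherence

variable {m L d : ℕ} (A : Matrix (Fin m) (Fin L × Fin d) ℝ)

lemma blockCoh_nonneg : 0 ≤ blockCoh A :=
  Real.iSup_nonneg fun _ => mul_nonneg (by positivity) (specNorm_nonneg _)

lemma subCoh_nonneg : 0 ≤ subCoh A :=
  Real.iSup_nonneg fun _ => abs_nonneg _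

lemma abs_bgram_self_le_subCoh (l : Fin L) {a b : Fin d} (hab : a ≠ b) :
    |bgram A l l a b| ≤ subCoh A :=
  le_ciSup (f := fun t : {t : Fin L × Fin d × Fin d // t.2.1 ≠ t.2.2} =>
    |dotp (acol A t.1.1 t.1.2.1) (acol A t.1.1 t.1.2.2)|) (Set.finite_range _).bddAbove
    ⟨(l, a, b), hab⟩

lemma bgram_self_diag (l : Fin L) (a : Fin d) : bgram A l l a a = e2norm (acol A l a) ^ 2 := by
  rw [e2norm_sq]
  simp only [bgram, dotp, sq]

lemma matBlock_Anz_gram (I1 : Finset (Fin L)) (s t : {l : Fin L // l ∈ I1}) :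
    matBlock ((Anz A I1)ᵀ * Anz A I1) s t = bgram A s t := rfl

lemma matBlock_Az_Anz (I1 : Finset (Fin L)) (s : {l : Fin L // l ∉ I1})
    (t : {l : Fin L // l ∈ I1}) : matBlock ((Az A I1)ᵀ * Anz A I1) s t = bgram A s t := rfl

variable {A} (hd : 0 < d)
include hd

lemma specNorm_bgram_le {i j : Fin L} (hij : i ≠ j) :
    specNorm (bgram A i j) ≤ d * blockCoh A := by
  have hle : 1 / (d : ℝ) * specNorm (bgram A i j) ≤ blockCoh A :=
    le_ciSup (f := fun p : {p : Fin L × Fin L // p.1 ≠ p.2} =>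
      1 / (d : ℝ) * specNorm (bgram A p.1.1 p.1.2)) (Set.finite_range _).bddAbove ⟨(i, j), hij⟩
  rwa [one_div, inv_mul_le_iff₀ (Nat.cast_pos.2 hd)] at hle

lemma bnorm2inf_Az_Anz_mulVec_le (I1 : Finset (Fin L)) (w : {l : Fin L // l ∈ I1} × Fin d → ℝ) :
    bnorm2inf (((Az A I1)ᵀ * Anz A I1) *ᵥ w) ≤ I1.card * d * blockCoh A * bnorm2inf w := by
  have h := bnorm2inf_mulVec_le (M := (Az A I1)ᵀ * Anz A I1)
    (mul_nonneg d.cast_nonneg (blockCoh_nonneg A))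
    (fun s t => by
      rw [matBlock_Az_Anz]
      exact specNorm_bgram_le hd fun hst => s.2 (hst ▸ t.2)) w
  rwa [Fintype.card_coe, ← mul_assoc] at h

variable (hA : ∀ l j, e2norm (acol A l j) = 1)
include hA

lemma le_e2norm_bgram_self_mulVec (l : Fin L) (u : Fin d → ℝ) :
    (1 - ((d : ℝ) - 1) * subCoh A) * e2norm u ≤ e2norm (bgram A l l *ᵥ u) := by
  have : Nonempty (Fin d) := Fin.pos_iff_nonempty.1 hd
  simpa only [Fintype.card_fin] using le_e2norm_mulVec_of_diag_eq_one (subCoh_nonneg A)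
    (fun a => by rw [bgram_self_diag, hA, one_pow])
    (fun a b => abs_bgram_self_le_subCoh A l) u

lemma le_bnorm2inf_Anz_gram_mulVec (I1 : Finset (Fin L))
    (w : {l : Fin L // l ∈ I1} × Fin d → ℝ) :
    (1 - ((d : ℝ) - 1) * subCoh A - ((I1.card : ℝ) - 1) * d * blockCoh A) * bnorm2inf w
      ≤ bnorm2inf (((Anz A I1)ᵀ * Anz A I1) *ᵥ w) := by
  have h := le_bnorm2inf_mulVec_of_block_dominant (M := (Anz A I1)ᵀ * Anz A I1)
    (fun s => by
      rw [matBlock_Anz_gram]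
      exact le_e2norm_bgram_self_mulVec hd hA s)
    (fun s t hst => by
      rw [matBlock_Anz_gram]
      exact specNorm_bgram_le hd (Subtype.coe_ne_coe.2 hst)) w
  rwa [Fintype.card_coe, ← mul_assoc] at h

end Coherence

theorem stmt5_general {m L d K : ℕ} (hd : 0 < d)
    (A : Matrix (Fin m) (Fin L × Fin d) ℝ)
    (hA : ∀ l j, e2norm (acol A l j) = 1)
    (μB ν : ℝ) (hμB : μB = blockCoh A) (hν : ν = subCoh A)
    (I1 : Finset (Fin L)) (hcard : I1.card = K)
    (hcond : 0 < 1 - ((d : ℝ) - 1) * ν - ((K : ℝ) - 1) * d * μB) :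
    LinearIndependent ℝ
        (fun c : {l : Fin L // l ∈ I1} × Fin d => fun i => Anz A I1 i c) ∧
      bOpNorm ((Az A I1)ᵀ * (pinvc (Anz A I1))ᵀ) ≤
        (K : ℝ) * d * μB / (1 - ((d : ℝ) - 1) * ν - ((K : ℝ) - 1) * d * μB) := by
  subst hcard hμB hν
  have hgram := le_bnorm2inf_Anz_gram_mulVec hd hA I1
  refine ⟨linearIndependent_col_of_isUnit_gram (isUnit_of_le_bnorm2inf_mulVec hcond hgram), ?_⟩
  rw [transpose_mul_transpose_pinvc]
  have hnum : (0 : ℝ) ≤ I1.card * d * blockCoh A :=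
    mul_nonneg (by positivity) (blockCoh_nonneg A)
  exact bOpNorm_mul_inv_le hcond hgram hnum (bnorm2inf_Az_Anz_mulVec_le hd I1)

/-- **Lemma 4 of Eldar–Kuppinger–Bölcskei (eq. (16) of the paper).**  If
`1 - (d-1)ν - (K-1)dμ_B > 0`, then `A_nz` has linearly independent columns and
`‖A_zᵀ (A_nz†)ᵀ‖₂,∞ ≤ K d μ_B / (1 - (d-1)ν - (K-1)dμ_B)`. -/
theorem stmt5 {m L d K : ℕ}
    (hm : m < L * d) (hd : 0 < d)
    (A : Matrix (Fin m) (Fin L × Fin d) ℝ)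
    (hA : ∀ l j, e2norm (acol A l j) = 1)
    (μB ν : ℝ) (hμB : μB = blockCoh A) (hν : ν = subCoh A)
    (I1 : Finset (Fin L)) (hcard : I1.card = K) (hKL : K < L)
    (hcond : 0 < 1 - ((d : ℝ) - 1) * ν - ((K : ℝ) - 1) * d * μB) :
    LinearIndependent ℝ
        (fun c : {l : Fin L // l ∈ I1} × Fin d => fun i => Anz A I1 i c) ∧
      bOpNorm ((Az A I1)ᵀ * (pinvc (Anz A I1))ᵀ) ≤
        (K : ℝ) * d * μB / (1 - ((d : ℝ) - 1) * ν - ((K : ℝ) - 1) * d * μB) :=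
  stmt5_general hd A hA μB ν hμB hν I1 hcard hcond
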